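/- (Consequence of Proposition 1: discrete maximum principle.) Under the hypotheses of the structure part of Proposition 1 (tensor-product rectangular grid with positive widths w_x and heights w_y, α > 0, constant β = (b₁,b₂), γ̄ > 0 elementwise, and edge stabilization values ρ_e ≥ max(Pe_e − 1, 0)), the stabilized MFV stiffness matrix K is invertible and all entries of K⁻¹ are nonnegative; in particular, if K u = g with g entrywise nonnegative, then u is entrywise nonnegative, irrespective of the convective term and of the mesh size. -/

import Mathlib

open Finset

/-- Distance `d_e` associated with the grid line at index `k ∈ {0, …, m}` of a 1D
partition with `m` element widths `w 0, …, w (m-1)`: half the first (resp. last) element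
width for the boundary lines `k = 0` (resp. `k = m`), and the average
`(w (k-1) + w k)/2` of the two adjacent element widths for interior lines. -/
noncomputable def dEdge (w : ℕ → ℝ) (m k : ℕ) : ℝ :=
  if k = 0 then w 0 / 2
  else if k = m then w (m - 1) / 2
  else (w (k - 1) + w k) / 2

/-- The stiffness matrix of the stabilized dual mixed-finite volume (MFV) scheme on an
`m × n` tensor-product rectangular grid with element widths `wx` and heights `wy`,
diffusion coefficient `α`, constant convective field `β = (b₁, b₂)`, elementwise mean
reaction coefficients `γ`, and artificial viscosities `ρv k j` (on the vertical edge
lying on grid line `k ∈ {0, …, m}` in row `j`) and `ρh k i` (on the horizontal edge lying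
on grid line `k ∈ {0, …, n}` in column `i`). -/
noncomputable def mfvMatrix (m n : ℕ) (α b₁ b₂ : ℝ) (wx wy : ℕ → ℝ)
    (γ ρv ρh : ℕ → ℕ → ℝ) :
    Matrix (Fin m × Fin n) (Fin m × Fin n) ℝ := fun p q =>
  let i : ℕ := p.1
  let j : ℕ := p.2
  let dv : ℕ → ℝ := dEdge wx m
  let dh : ℕ → ℝ := dEdge wy n
  if p = q then
    (α * (1 + ρv i j) / dv i + (-b₁) / 2) * wy j
      + (α * (1 + ρv (i + 1) j) / dv (i + 1) + b₁ / 2) * wy j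
      + (α * (1 + ρh j i) / dh j + (-b₂) / 2) * wx i
      + (α * (1 + ρh (j + 1) i) / dh (j + 1) + b₂ / 2) * wx i
      + γ i j * (wx i * wy j)
  else if p.2 = q.2 ∧ (q.1 : ℕ) = i + 1 then
    (-(α * (1 + ρv (i + 1) j)) / dv (i + 1) + b₁ / 2) * wy j
  else if p.2 = q.2 ∧ i = (q.1 : ℕ) + 1 then
    (-(α * (1 + ρv i j)) / dv i - b₁ / 2) * wy j
  else if p.1 = q.1 ∧ (q.2 : ℕ) = j + 1 then
    (-(α * (1 + ρh (j + 1) i)) / dh (j + 1) + b₂ / 2) * wx i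
  else if p.1 = q.1 ∧ j = (q.2 : ℕ) + 1 then
    (-(α * (1 + ρh j i)) / dh j - b₂ / 2) * wx i
  else 0

/-!
Splitting by coordinate directions, `K` is a reaction term, a positive diagonal matrix, plus
one-dimensional flux matrices along the rows and the columns of the grid. The bound
`|β · n_e| d_e ≤ 2 α (1 + ρ_e)` makes the off-diagonal entries of the flux matrices nonpositive.
The fluxes of a constant field cancel in a full row, so the row sums are nonnegative, a neighbour
missing at the boundary only increasing them. At an index where `u` attains a negative minimum,
`K u` would therefore be negative.
-/

open Matrix

section MonotoneMatrix

/-- Monotone matrices in the sense of Collatz, for which the linear system `K u = g` preserves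
nonnegativity of the data. -/
def IsMonotoneMatrix {ι R : Type*} [Fintype ι] [NonUnitalNonAssocSemiring R] [LE R]
    (K : Matrix ι ι R) : Prop :=
  ∀ u, 0 ≤ K *ᵥ u → 0 ≤ u

namespace IsMonotoneMatrix

variable {ι R : Type*} [Fintype ι]

theorem le_of_mulVec_le [NonUnitalNonAssocRing R] [PartialOrder R] [IsOrderedAddMonoid R]
    {K : Matrix ι ι R} (hK : IsMonotoneMatrix K) {u v : ι → R} (h : K *ᵥ u ≤ K *ᵥ v) : u ≤ v :=
  sub_nonneg.mp <| hK (v - u) <| by rwa [mulVec_sub, sub_nonneg]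

theorem mulVec_injective [NonUnitalNonAssocRing R] [PartialOrder R] [IsOrderedAddMonoid R]
    {K : Matrix ι ι R} (hK : IsMonotoneMatrix K) : Function.Injective K.mulVec :=
  fun _ _ h => le_antisymm (hK.le_of_mulVec_le h.le) (hK.le_of_mulVec_le h.ge)

variable [DecidableEq ι] [Field R] [PartialOrder R]

theorem isUnit [IsOrderedAddMonoid R] {K : Matrix ι ι R} (hK : IsMonotoneMatrix K) : IsUnit K :=
  mulVec_injective_iff_isUnit.mp hK.mulVec_injective

theorem inv_nonneg [IsOrderedRing R] {K : Matrix ι ι R} (hK : IsMonotoneMatrix K) (p q : ι) :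
    0 ≤ K⁻¹ p q := by
  have hdet : IsUnit K.det := K.isUnit_iff_isUnit_det.mp hK.isUnit
  have hcol : K *ᵥ (K⁻¹).col q = Pi.single q 1 := by
    rw [← mulVec_single_one, mulVec_mulVec, mul_nonsing_inv K hdet, one_mulVec]
  exact hK ((K⁻¹).col q) (hcol ▸ Pi.single_nonneg.mpr zero_le_one) p

end IsMonotoneMatrix

end MonotoneMatrix

section DominantZMatrix

/-- Z-matrices (nonpositive off-diagonal entries) that are weakly diagonally dominant by rows with
nonnegative diagonal; for a Z-matrix, this amounts to nonnegative row sums. -/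
structure IsDominantZMatrix {ι R : Type*} [Fintype ι] [AddCommMonoid R] [LE R]
    (A : Matrix ι ι R) : Prop where
  offDiag_nonpos : ∀ p q, p ≠ q → A p q ≤ 0
  rowSum_nonneg : ∀ p, 0 ≤ ∑ q, A p q

namespace IsDominantZMatrix

variable {ι κ R : Type*} [Fintype ι] [Fintype κ]

theorem add [AddCommMonoid R] [PartialOrder R] [IsOrderedAddMonoid R] {A B : Matrix ι ι R}
    (hA : IsDominantZMatrix A) (hB : IsDominantZMatrix B) : IsDominantZMatrix (A + B) where
  offDiag_nonpos p q hpq := add_nonpos (hA.offDiag_nonpos p q hpq) (hB.offDiag_nonpos p q hpq)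
  rowSum_nonneg p := by
    simpa only [Matrix.add_apply, sum_add_distrib] using
      add_nonneg (hA.rowSum_nonneg p) (hB.rowSum_nonneg p)

theorem smul [Semiring R] [PartialOrder R] [IsOrderedRing R] {A : Matrix ι ι R}
    (hA : IsDominantZMatrix A) {c : R} (hc : 0 ≤ c) : IsDominantZMatrix (c • A) where
  offDiag_nonpos p q hpq := mul_nonpos_of_nonneg_of_nonpos hc (hA.offDiag_nonpos p q hpq)
  rowSum_nonneg p := by
    simpa only [Matrix.smul_apply, smul_eq_mul, ← mul_sum] using mul_nonneg hc (hA.rowSum_nonneg p)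

theorem submatrix_equiv [AddCommMonoid R] [LE R] {A : Matrix ι ι R} (hA : IsDominantZMatrix A)
    (e : κ ≃ ι) : IsDominantZMatrix (A.submatrix e e) where
  offDiag_nonpos p q hpq := hA.offDiag_nonpos (e p) (e q) (e.injective.ne hpq)
  rowSum_nonneg p := (hA.rowSum_nonneg (e p)).trans_eq (e.sum_comp (A (e p))).symm

theorem blockDiagonal [DecidableEq κ] [AddCommMonoid R] [Preorder R] {A : κ → Matrix ι ι R}
    (hA : ∀ k, IsDominantZMatrix (A k)) : IsDominantZMatrix (blockDiagonal A) where
  offDiag_nonpos := by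
    rintro ⟨i, k⟩ ⟨j, l⟩ hne
    rw [blockDiagonal_apply']
    split_ifs with hkl
    · exact (hA k).offDiag_nonpos i j fun hij => hne (Prod.ext hij hkl)
    · exact le_rfl
  rowSum_nonneg := by
    rintro ⟨i, k⟩
    simpa only [Fintype.sum_prod_type, blockDiagonal_apply', sum_ite_eq, mem_univ, if_true]
      using (hA k).rowSum_nonneg i

theorem mulVec_apply_nonpos_of_isMin [Ring R] [PartialOrder R] [IsOrderedRing R]
    {A : Matrix ι ι R} (hA : IsDominantZMatrix A) {u : ι → R} {p : ι} (hmin : ∀ q, u p ≤ u q)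
    (hp : u p ≤ 0) : (A *ᵥ u) p ≤ 0 :=
  calc (A *ᵥ u) p = ∑ q, A p q * u q := rfl
    _ ≤ ∑ q, A p q * u p := sum_le_sum fun q _ => by
      rcases eq_or_ne p q with rfl | hpq
      · exact le_rfl
      · exact mul_le_mul_of_nonpos_left (hmin q) (hA.offDiag_nonpos p q hpq)
    _ = (∑ q, A p q) * u p := (sum_mul ..).symm
    _ ≤ 0 := mul_nonpos_of_nonneg_of_nonpos (hA.rowSum_nonneg p) hp

theorem isMonotoneMatrix_add_diagonal [DecidableEq ι] [Ring R] [LinearOrder R]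
    [IsStrictOrderedRing R] {A : Matrix ι ι R} (hA : IsDominantZMatrix A) {d : ι → R}
    (hd : ∀ p, 0 < d p) : IsMonotoneMatrix (A + diagonal d) := by
  intro u hu r
  have : Nonempty ι := ⟨r⟩
  obtain ⟨p, hmin⟩ := Finite.exists_min u
  suffices hp : 0 ≤ u p from hp.trans (hmin r)
  by_contra! hneg
  have hflux : (A *ᵥ u) p ≤ 0 := hA.mulVec_apply_nonpos_of_isMin hmin hneg.le
  have hreaction : d p * u p < 0 := mul_neg_of_pos_of_neg (hd p) hneg
  have hsum : 0 ≤ (A *ᵥ u) p + d p * u p := by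
    simpa only [add_mulVec, Pi.add_apply, mulVec_diagonal, Pi.zero_apply] using hu p
  exact hsum.not_gt (add_neg_of_nonpos_of_neg hflux hreaction)

end IsDominantZMatrix

end DominantZMatrix

theorem le_sum_ite_of_subsingleton {ι M : Type*} [Fintype ι] [AddCommMonoid M] [PartialOrder M]
    [IsOrderedAddMonoid M] {P : ι → Prop} [DecidablePred P] (hP : {x | P x}.Subsingleton)
    {c : M} (hc : c ≤ 0) : c ≤ ∑ x, if P x then c else 0 := by
  have hcard : #{x | P x} ≤ 1 := by
    rw [card_le_one_iff_subsingleton, coe_filter_univ]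
    exact hP
  rw [← sum_filter, sum_const]
  interval_cases #{x | P x}
  · rwa [zero_nsmul]
  · rw [one_nsmul]

section LineFlux

variable {R : Type*} [Field R]

/-- The finite volume matrix of the total flux out of each cell of a one-dimensional grid of `m`
cells. The grid line `k` separates the cells `k - 1` and `k`, `a k` is its diffusive
transmissibility `α (1 + ρ_e) / d_e`, and `b` is the constant velocity, centrally averaged.
The exterior value at the two boundary lines is zero. -/
def lineFluxMatrix (m : ℕ) (b : R) (a : ℕ → R) : Matrix (Fin m) (Fin m) R := fun i j =>
  (if i = j then (a i - b / 2) + (a (i + 1) + b / 2) else 0)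
    + (if (j : ℕ) = i + 1 then -a (i + 1) + b / 2 else 0)
    + (if (i : ℕ) = j + 1 then -a i - b / 2 else 0)

theorem isDominantZMatrix_lineFluxMatrix [LinearOrder R] [IsStrictOrderedRing R] {m : ℕ} {b : R}
    {a : ℕ → R} (ha : ∀ k ≤ m, |b| / 2 ≤ a k) : IsDominantZMatrix (lineFluxMatrix m b a) := by
  have hright (i : Fin m) : -a (i + 1) + b / 2 ≤ 0 := by
    linarith [ha (i + 1) i.isLt, le_abs_self b]
  have hleft (i : Fin m) : -a i - b / 2 ≤ 0 := by
    linarith [ha i i.isLt.le, neg_abs_le b]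
  refine ⟨fun i j hij => ?_, fun i => ?_⟩
  · rw [lineFluxMatrix, if_neg hij, zero_add]
    exact add_nonpos (by split_ifs <;> simp only [hright, le_refl])
      (by split_ifs <;> simp only [hleft, le_refl])
  · simp only [lineFluxMatrix, sum_add_distrib, sum_ite_eq, mem_univ, if_true]
    calc (0 : R) = (a i - b / 2) + (a (i + 1) + b / 2) + (-a (i + 1) + b / 2) + (-a i - b / 2) := by
          ring
      _ ≤ _ := by
        gcongr
        · exact le_sum_ite_of_subsingleton (fun j hj k hk => Fin.ext (hj.trans hk.symm)) (hright i)
        · exact le_sum_ite_of_subsingleton (fun j hj k hk =>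
            Fin.ext (Nat.succ_injective (hj.symm.trans hk))) (hleft i)

end LineFlux

theorem mfvMatrix_eq_lineFluxMatrix_add_diagonal (m n : ℕ) (α b₁ b₂ : ℝ) (wx wy : ℕ → ℝ)
    (γ ρv ρh : ℕ → ℕ → ℝ) :
    mfvMatrix m n α b₁ b₂ wx wy γ ρv ρh =
      blockDiagonal (fun j : Fin n =>
          wy j • lineFluxMatrix m b₁ fun k => α * (1 + ρv k j) / dEdge wx m k)
        + (blockDiagonal fun i : Fin m =>
            wx i • lineFluxMatrix n b₂ fun k => α * (1 + ρh k i) / dEdge wy n k).submatrix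
              (Equiv.prodComm _ _) (Equiv.prodComm _ _)
        + diagonal fun p : Fin m × Fin n => γ p.1 p.2 * (wx p.1 * wy p.2) := by
  ext ⟨i, j⟩ ⟨k, l⟩
  simp only [mfvMatrix, lineFluxMatrix, Matrix.add_apply, submatrix_apply, blockDiagonal_apply',
    Equiv.prodComm_apply, Prod.swap_prod_mk, Matrix.smul_apply, smul_eq_mul, diagonal_apply,
    Prod.mk.injEq]
  rcases eq_or_ne i k with rfl | hik <;> rcases eq_or_ne j l with rfl | hjl
  · simp only [and_self, if_true, left_eq_add, one_ne_zero, if_false, add_zero]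
    ring
  · simp only [hjl, and_false, false_and, true_and, if_true, if_false, zero_add, add_zero]
    split_ifs <;> first | omega | ring
  · simp only [hik, and_true, false_and, true_and, if_true, if_false, zero_add, add_zero]
    split_ifs <;> first | omega | ring
  · simp only [hik, hjl, false_and, if_false, add_zero]

theorem dEdge_pos {w : ℕ → ℝ} {m k : ℕ} (hm : 1 ≤ m) (hw : ∀ i < m, 0 < w i) (hk : k ≤ m) :
    0 < dEdge w m k := by
  unfold dEdge
  split_ifs with hfirst hlast
  · exact half_pos (hw 0 hm)
  · exact half_pos (hw (m - 1) (by omega))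
  · exact half_pos (add_pos (hw (k - 1) (by omega)) (hw k (by omega)))

theorem isDominantZMatrix_lineFluxMatrix_dEdge {m : ℕ} (hm : 1 ≤ m) {α b : ℝ} {w ρ : ℕ → ℝ}
    (hw : ∀ i < m, 0 < w i) (hρ : ∀ k ≤ m, |b| * dEdge w m k ≤ 2 * (α * (1 + ρ k))) :
    IsDominantZMatrix (lineFluxMatrix m b fun k => α * (1 + ρ k) / dEdge w m k) := by
  refine isDominantZMatrix_lineFluxMatrix fun k hk => ?_
  rw [le_div_iff₀ (dEdge_pos hm hw hk)]
  linarith [hρ k hk]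

theorem abs_mul_le_of_peclet_sub_one_le {α b d ρ : ℝ} (hα : 0 < α)
    (h : |b| * d / (2 * α) - 1 ≤ ρ) : |b| * d ≤ 2 * (α * (1 + ρ)) := by
  rw [sub_le_iff_le_add', div_le_iff₀ (by positivity)] at h
  linarith

theorem mfvMatrix_discrete_maximum_principle_general (m n : ℕ) (hm : 1 ≤ m) (hn : 1 ≤ n)
    (α b₁ b₂ : ℝ)
    (wx wy : ℕ → ℝ) (hwx : ∀ i < m, 0 < wx i) (hwy : ∀ j < n, 0 < wy j)
    (γ : ℕ → ℕ → ℝ) (hγ : ∀ i < m, ∀ j < n, 0 < γ i j)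
    (ρv ρh : ℕ → ℕ → ℝ)
    (hρv : ∀ k ≤ m, ∀ j < n, |b₁| * dEdge wx m k ≤ 2 * (α * (1 + ρv k j)))
    (hρh : ∀ k ≤ n, ∀ i < m, |b₂| * dEdge wy n k ≤ 2 * (α * (1 + ρh k i))) :
    IsUnit (mfvMatrix m n α b₁ b₂ wx wy γ ρv ρh) ∧
    (∀ p q, 0 ≤ (mfvMatrix m n α b₁ b₂ wx wy γ ρv ρh)⁻¹ p q) ∧
    (∀ u g : Fin m × Fin n → ℝ,
      (mfvMatrix m n α b₁ b₂ wx wy γ ρv ρh).mulVec u = g →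
      (∀ p, 0 ≤ g p) → ∀ p, 0 ≤ u p) := by
  have hrows := IsDominantZMatrix.blockDiagonal fun j : Fin n =>
    (isDominantZMatrix_lineFluxMatrix_dEdge hm hwx fun k hk => hρv k hk j j.isLt).smul
      (hwy j j.isLt).le
  have hcolumns := IsDominantZMatrix.blockDiagonal fun i : Fin m =>
    (isDominantZMatrix_lineFluxMatrix_dEdge hn hwy fun k hk => hρh k hk i i.isLt).smul
      (hwx i i.isLt).le
  have hreaction (p : Fin m × Fin n) : 0 < γ p.1 p.2 * (wx p.1 * wy p.2) :=
    mul_pos (hγ _ p.1.isLt _ p.2.isLt) (mul_pos (hwx _ p.1.isLt) (hwy _ p.2.isLt))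
  have hK : IsMonotoneMatrix (mfvMatrix m n α b₁ b₂ wx wy γ ρv ρh) := by
    rw [mfvMatrix_eq_lineFluxMatrix_add_diagonal]
    exact (hrows.add (hcolumns.submatrix_equiv _)).isMonotoneMatrix_add_diagonal hreaction
  exact ⟨hK.isUnit, hK.inv_nonneg, fun u g hug hg => hK u (hug ▸ hg)⟩

/-- consequence of Proposition 1: discrete maximum principle. Under the
hypotheses of the structure part of Proposition 1, the stabilized MFV stiffness matrix
`K` is invertible and all entries of `K⁻¹` are nonnegative; in particular, if `K u = g`
with `g` entrywise nonnegative, then `u` is entrywise nonnegative, irrespective of the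
convective term and of the mesh size. -/
theorem mfvMatrix_discrete_maximum_principle (m n : ℕ) (hm : 1 ≤ m) (hn : 1 ≤ n)
    (α b₁ b₂ : ℝ) (hα : 0 < α)
    (wx wy : ℕ → ℝ) (hwx : ∀ i < m, 0 < wx i) (hwy : ∀ j < n, 0 < wy j)
    (γ : ℕ → ℕ → ℝ) (hγ : ∀ i < m, ∀ j < n, 0 < γ i j)
    (ρv ρh : ℕ → ℕ → ℝ)
    (hρv : ∀ k ≤ m, ∀ j < n, max (|b₁| * dEdge wx m k / (2 * α) - 1) 0 ≤ ρv k j)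
    (hρh : ∀ k ≤ n, ∀ i < m, max (|b₂| * dEdge wy n k / (2 * α) - 1) 0 ≤ ρh k i) :
    IsUnit (mfvMatrix m n α b₁ b₂ wx wy γ ρv ρh) ∧
    (∀ p q, 0 ≤ (mfvMatrix m n α b₁ b₂ wx wy γ ρv ρh)⁻¹ p q) ∧
    (∀ u g : Fin m × Fin n → ℝ,
      (mfvMatrix m n α b₁ b₂ wx wy γ ρv ρh).mulVec u = g →
      (∀ p, 0 ≤ g p) → ∀ p, 0 ≤ u p) := by
  exact mfvMatrix_discrete_maximum_principle_general m n hm hn α b₁ b₂ wx wy hwx hwy γ hγ ρv ρh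
    (fun k hk j hj => abs_mul_le_of_peclet_sub_one_le hα ((le_max_left _ _).trans (hρv k hk j hj)))
    (fun k hk i hi => abs_mul_le_of_peclet_sub_one_le hα ((le_max_left _ _).trans (hρh k hk i hi)))
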